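/- Let K be a field of characteristic zero, V a finite-dimensional K-vector space, σ a linear automorphism of V, L a one-dimensional subspace and R a codimension-one subspace of V. Then the set { n ∈ ℕ | σⁿ(L) ⊆ R } is the union of a finite set and finitely many arithmetic progressions. -/

import Mathlib

def IsSML (N : Set ℕ) : Prop :=
  ∃ (F : Finset ℕ) (k : ℕ) (α β : Fin k → ℕ),
    N = (↑F : Set ℕ) ∪ ⋃ i : Fin k, {m : ℕ | ∃ t : ℕ, m = α i + t * β i}

theorem isSML_of_residues (Z : Set ℕ) (N : ℕ) (hN : 0 < N)
    (h : ∀ r < N, (∀ n, r + N * n ∈ Z) ∨ {n | r + N * n ∈ Z}.Finite) : IsSML Z := by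
  classical
  let G : Finset ℕ := (Finset.range N).filter (fun r => ∀ n, r + N * n ∈ Z)
  let B : Set ℕ := ⋃ r ∈ {r | r < N ∧ ¬ ∀ n, r + N * n ∈ Z}, (fun n => r + N * n) '' {n | r + N * n ∈ Z}
  have hB : B.Finite := by
    refine Set.Finite.biUnion ((Set.finite_lt_nat N).subset fun r hr => hr.1) ?_
    rintro r ⟨hr, hr2⟩
    exact ((h r hr).resolve_left hr2).image _
  refine ⟨hB.toFinset, G.card, fun i => (G.equivFin.symm i : ℕ), fun _ => N, ?_⟩
  ext m
  simp only [Set.Finite.coe_toFinset, Set.mem_union, Set.mem_iUnion, Set.mem_ofPred_eq]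
  constructor
  · intro hm
    have hlt := Nat.mod_lt m hN
    have hdiv := Nat.mod_add_div m N
    by_cases hg : ∀ n, m % N + N * n ∈ Z
    · right
      refine ⟨G.equivFin ⟨m % N, by simp [G, hlt]; exact hg⟩, m / N, ?_⟩
      simp
      rw [mul_comm]; exact hdiv.symm
    · left
      simp only [B, Set.mem_iUnion]
      exact ⟨m % N, ⟨hlt, hg⟩, m / N, by simpa [hdiv] using hm, hdiv⟩
  · rintro (hm | ⟨i, t, rfl⟩)
    · simp only [B, Set.mem_iUnion] at hm
      obtain ⟨r, _, n, hn, rfl⟩ := hm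
      exact hn
    · have := (G.equivFin.symm i).2
      simp only [G, Finset.mem_filter] at this
      rw [mul_comm]
      exact this.2 t

open Polynomial in
/-- Vanishing to infinite order. -/
theorem newton_zero {S : Type*} [CommRing S] [IsDomain S] [CharZero S] (p : S)
    (hp : ∀ x : S, (∀ j : ℕ, p ^ j ∣ x) → x = 0) (w : ℕ → S) (f : ℕ → S)
    (hf : ∀ n m, n ≤ m → f n = ∑ k ∈ Finset.range (m + 1), (n.descFactorial k : S) * (p ^ k * w k))
    (hinf : {n | f n = 0}.Infinite) (x : ℕ) : f x = 0 := by
  classical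
  apply hp
  intro j
  obtain ⟨T, hT, hTc⟩ := hinf.exists_subset_card_eq j
  let D : ℤ[X] := ∏ t ∈ T, (X - C (t : ℤ))
  have hD : D.Monic := monic_prod_of_monic _ _ fun i _ => monic_X_sub_C _
  have hDd : D.natDegree = j := by
    rw [natDegree_prod_of_monic _ _ fun i _ => monic_X_sub_C _]; simp only [natDegree_X_sub_C]; simp [hTc]
  obtain ⟨m, hm⟩ : ∃ m, x ≤ m ∧ ∀ t ∈ T, t ≤ m :=
    ⟨max x (T.sup id), le_max_left _ _, fun t ht => le_max_of_le_right (Finset.le_sup (f := id) ht)⟩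
  let c := Int.castRingHom S
  let q : ℕ → ℤ[X] := fun k => descPochhammer ℤ k /ₘ D
  let r : ℕ → ℤ[X] := fun k => descPochhammer ℤ k %ₘ D
  have hdec : ∀ k (n : ℕ), (n.descFactorial k : S) =
      (r k).eval₂ c n + D.eval₂ c n * (q k).eval₂ c n := by
    intro k n
    have h1 := congrArg (fun P => eval₂ c (n : S) P) (modByMonic_add_div (descPochhammer ℤ k) D)
    simp only [eval₂_add, eval₂_mul] at h1
    rw [h1]
    have h2 := descPochhammer_eval_eq_descFactorial ℤ n k
    have h3 : eval₂ c (n : S) (descPochhammer ℤ k) = c (eval (n : ℤ) (descPochhammer ℤ k)) := by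
      rw [← eval₂_at_apply]; simp
    rw [h3, h2]; simp
  let Rm : S[X] := ∑ k ∈ Finset.range (m + 1), (r k).map c * C (p ^ k * w k)
  have hRm : ∀ n ≤ m, f n = Rm.eval (n : S) + D.eval₂ c n *
      ∑ k ∈ Finset.range (m + 1), (q k).eval₂ c n * (p ^ k * w k) := by
    intro n hn
    rw [hf n m hn]
    simp only [Rm, eval_finsetSum, eval_mul, eval_map, eval_C, Finset.mul_sum, ← Finset.sum_add_distrib]
    refine Finset.sum_congr rfl fun k _ => ?_
    rw [hdec]; ring
  have hDT : ∀ t ∈ T, D.eval₂ c (t : S) = 0 := by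
    intro t ht
    simp only [D, eval₂_finsetProd]
    exact Finset.prod_eq_zero ht (by simp)
  have hR0 : Rm = 0 := by
    refine eq_zero_of_degree_lt_of_eval_finset_eq_zero (T.image (Nat.cast : ℕ → S)) ?_ ?_
    · rw [Finset.card_image_of_injective _ Nat.cast_injective, hTc, ← mem_degreeLT]
      refine Submodule.sum_mem _ fun k _ => ?_
      rw [mul_comm, ← smul_eq_C_mul]
      refine Submodule.smul_mem _ _ ?_
      rw [mem_degreeLT]
      refine degree_map_le.trans_lt ?_
      refine (degree_modByMonic_lt _ hD).trans_le ?_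
      rw [← hDd]; exact degree_le_natDegree
    · intro y hy
      obtain ⟨t, ht, rfl⟩ := Finset.mem_image.1 hy
      have h1 := hRm t (hm.2 t ht)
      rw [hDT t ht, zero_mul, add_zero] at h1
      rw [← h1]; exact hT ht
  rw [hRm x hm.1, hR0, eval_zero, zero_add]
  refine Dvd.dvd.mul_left (Finset.dvd_sum fun k _ => ?_) _
  rcases lt_or_ge k j with hk | hk
  · have : q k = 0 := by
      rw [divByMonic_eq_zero_iff hD]
      apply degree_lt_degree
      rw [hDd, descPochhammer_natDegree]; exact hk
    simp [this]
  · exact Dvd.dvd.mul_left (Dvd.dvd.mul_right (pow_dvd_pow p hk) _) _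

theorem factorial_dvd_padic (p : ℕ) [Fact p.Prime] (k : ℕ) : ((k.factorial : ℕ) : ℤ_[p]) ∣ (p : ℤ_[p]) ^ k := by
  have h1 := sub_one_mul_padicValNat_factorial (p := p) k
  have hp := (Fact.out : p.Prime).two_le
  have h2 : padicValNat p k.factorial ≤ k := by
    have : padicValNat p k.factorial ≤ (p - 1) * padicValNat p k.factorial :=
      Nat.le_mul_of_pos_left _ (by omega)
    omega
  obtain ⟨m, hm⟩ := pow_padicValNat_dvd (p := p) (n := k.factorial)
  have hcop : ¬ p ∣ m := by
    rintro ⟨l, rfl⟩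
    refine pow_succ_padicValNat_not_dvd (p := p) (Nat.factorial_ne_zero k) ⟨l, ?_⟩
    rw [pow_succ, mul_assoc]; exact hm
  have hu : IsUnit (m : ℤ_[p]) := by
    rw [PadicInt.isUnit_iff, PadicInt.norm_natCast_eq_one_iff]
    exact (Nat.Prime.coprime_iff_not_dvd Fact.out).2 hcop
  rw [hm]; push_cast
  rw [hu.mul_right_dvd]
  exact pow_dvd_pow _ h2

/-- Generic points of `ℤ_p^ι`. -/
theorem exists_generic_point {ι : Type*} [Finite ι] (g : MvPolynomial ι ℤ) (hg : g ≠ 0) :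
    ∃ (p : ℕ) (_ : Fact p.Prime) (ψ : MvPolynomial ι ℤ →+* ℤ_[p]),
      Function.Injective ψ ∧ IsUnit (ψ g) := by
  classical
  have := Fintype.ofFinite ι
  obtain ⟨c, hc⟩ : ∃ c : ι → ℤ, MvPolynomial.eval c g ≠ 0 := by
    by_contra! h
    exact hg (MvPolynomial.funext fun x => by simpa using h x)
  obtain ⟨p, hpgt, hp⟩ := Nat.exists_infinite_primes ((MvPolynomial.eval c g).natAbs + 1)
  have : Fact p.Prime := ⟨hp⟩
  refine ⟨p, ⟨hp⟩, ?_⟩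
  let cast := Int.castRingHom ℤ_[p]
  have hcont : ∀ f : MvPolynomial ι ℤ, Continuous fun t : ι → ℤ_[p] => MvPolynomial.eval₂ cast t f := by
    intro f
    simp_rw [← MvPolynomial.eval_map]
    exact MvPolynomial.continuous_eval _
  let U : Set (ι → ℤ_[p]) := {t | IsUnit (MvPolynomial.eval₂ cast t g)}
  have hUo : IsOpen U := by
    have : U = (fun t => MvPolynomial.eval₂ cast t g) ⁻¹' {x | IsUnit x} := rfl
    rw [this]
    exact Units.isOpen.preimage (hcont g)
  have hUn : U.Nonempty := by
    refine ⟨fun i => (c i : ℤ_[p]), ?_⟩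
    have h1 : MvPolynomial.eval₂ cast (fun i => (c i : ℤ_[p])) g = ((MvPolynomial.eval c g : ℤ) : ℤ_[p]) := by
      have := MvPolynomial.eval₂_comp_left cast (RingHom.id ℤ) c g
      rw [RingHom.comp_id] at this
      exact this.symm
    change IsUnit _
    rw [h1, PadicInt.isUnit_iff]
    refine le_antisymm (PadicInt.norm_le_one _) (not_lt.1 fun hlt => ?_)
    rw [PadicInt.norm_intCast_lt_one_iff] at hlt
    have := Int.natCast_dvd.1 hlt
    have := Nat.le_of_dvd (Int.natAbs_pos.2 hc) this
    omega
  have : Countable (MvPolynomial ι ℤ) := by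
    rw [← Cardinal.mk_le_aleph0_iff]
    refine MvPolynomial.cardinalMk_le_max_lift.trans ?_
    simp
  have hd : Dense (⋂ f : {f : MvPolynomial ι ℤ // f ≠ 0}, {t : ι → ℤ_[p] | MvPolynomial.eval₂ cast t f.1 ≠ 0}) := by
    apply dense_iInter_of_isOpen
    · intro f
      exact isOpen_ne.preimage (hcont f.1)
    · rintro ⟨f, hf⟩
      rw [dense_iff_inter_open]
      rintro W hW ⟨t, ht⟩
      by_contra hne
      apply hf
      obtain ⟨ε, hε, hball⟩ := Metric.isOpen_iff.1 hW t ht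
      have hmap : MvPolynomial.map cast f = 0 := by
        refine MvPolynomial.funext_set (fun i => Metric.ball (t i) ε) (fun i => ?_) ?_
        · have hne : (nhdsWithin (t i) {t i}ᶜ).NeBot := by
            have h1 : Filter.Tendsto (fun n : ℕ => t i + (p : ℤ_[p]) ^ n) Filter.atTop
                (nhdsWithin (t i) {t i}ᶜ) := by
              rw [tendsto_nhdsWithin_iff]
              constructor
              · have h2 := tendsto_pow_atTop_nhds_zero_of_norm_lt_one (x := (p : ℤ_[p]))
                  (by rw [PadicInt.norm_p]; exact inv_lt_one_of_one_lt₀ (by exact_mod_cast hp.one_lt))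
                simpa using h2.const_add (t i)
              · refine Filter.Eventually.of_forall fun n => ?_
                have : (p : ℤ_[p]) ^ n ≠ 0 := pow_ne_zero _ (by exact_mod_cast hp.ne_zero)
                simpa using this
            exact h1.neBot
          exact infinite_of_mem_nhds (t i) (Metric.ball_mem_nhds _ hε)
        · intro x hx
          rw [map_zero, MvPolynomial.eval_map]
          by_contra h0
          refine hne ⟨x, hball ?_, h0⟩
          rw [ball_pi _ hε]; exact hx
      exact MvPolynomial.map_injective cast (RingHom.injective_int cast) (by simpa using hmap)
  obtain ⟨t, htU, ht⟩ := hd.inter_open_nonempty U hUo hUn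
  refine ⟨MvPolynomial.eval₂Hom cast t, ?_, htU⟩
  rw [injective_iff_map_eq_zero]
  intro f hf
  by_contra h0
  exact Set.mem_iInter.1 ht ⟨f, h0⟩ hf

theorem exists_padic_embedding {K : Type*} [Field K] [CharZero K] (s : Finset K) :
    ∃ (p : ℕ) (_ : Fact p.Prime) (φ : Algebra.adjoin ℤ (s : Set K) →+* AlgebraicClosure ℚ_[p]),
      Function.Injective φ ∧ ∀ a, IsIntegral ℤ_[p] (φ a) := by
  classical
  let A := Algebra.adjoin ℤ (s : Set K)
  let s' : Set A := {a | (a : K) ∈ s}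
  have hs'f : s'.Finite := s.finite_toSet.preimage Subtype.val_injective.injOn
  have hs' : Algebra.adjoin ℤ s' = ⊤ := Algebra.adjoin_adjoin_coe_preimage
  have : Algebra.IsAlgebraic (Algebra.adjoin ℤ s') A := by
    refine ⟨fun a => ?_⟩
    exact isAlgebraic_algebraMap (⟨a, hs' ▸ trivial⟩ : Algebra.adjoin ℤ s')
  obtain ⟨t, hts, htb⟩ := exists_isTranscendenceBasis_subset (R := ℤ) s'
  have : Finite t := hs'f.subset hts
  let R := MvPolynomial t ℤ
  let : Algebra R A := (MvPolynomial.aeval (R := ℤ) ((↑) : t → A)).toAlgebra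
  have hinjRA : Function.Injective (algebraMap R A) := htb.1
  have : FaithfulSMul R A := (faithfulSMul_iff_algebraMap_injective R A).2 hinjRA
  have halg : Algebra.IsAlgebraic R A := by
    have := htb.isAlgebraic
    exact Algebra.IsAlgebraic.of_ringHom_of_comp_eq (S := Algebra.adjoin ℤ (Set.range ((↑) : t → A)))
      (B := A) htb.1.aevalEquiv (RingHom.id A) htb.1.aevalEquiv.surjective Function.injective_id
      (RingHom.ext fun x => htb.1.algebraMap_aevalEquiv x)
  have hIntegral : ∀ a : A, ∃ y : R, y ≠ 0 ∧ IsIntegral R (y • a) := fun a =>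
    (halg.isAlgebraic a).exists_integral_multiple
  choose y hy0 hy using hIntegral
  obtain ⟨p, hp, ψ, hψ, hu⟩ := exists_generic_point (∏ a ∈ hs'f.toFinset, y a)
    (Finset.prod_ne_zero_iff.2 fun a _ => hy0 a)
  refine ⟨p, hp, ?_⟩
  let F := AlgebraicClosure ℚ_[p]
  let : Algebra R F := ((algebraMap ℤ_[p] F).comp ψ).toAlgebra
  have hZF : Function.Injective (algebraMap ℤ_[p] F) := by
    rw [IsScalarTower.algebraMap_eq ℤ_[p] ℚ_[p] F]
    exact (algebraMap ℚ_[p] F).injective.comp (FaithfulSMul.algebraMap_injective _ _)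
  have hinjRF : Function.Injective (algebraMap R F) := hZF.comp hψ
  have : FaithfulSMul R F := (faithfulSMul_iff_algebraMap_injective R F).2 hinjRF
  let φ : A →ₐ[R] F := IsAlgClosed.lift
  refine ⟨φ.toRingHom, ?_, ?_⟩
  · rw [injective_iff_map_eq_zero]
    intro a ha
    by_contra h0
    obtain ⟨r, hr, b, hb⟩ := (halg.isAlgebraic a).exists_nonzero_dvd (mem_nonZeroDivisors_of_ne_zero h0)
    apply hr
    apply hinjRF
    rw [← φ.commutes, hb, map_mul, map_zero]
    have : φ a = 0 := ha
    rw [this, zero_mul]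
  · have hgen : ∀ a ∈ s', IsIntegral ℤ_[p] (φ a) := by
      intro a ha
      have h1 : IsUnit (ψ (y a)) := by
        rw [map_prod] at hu
        exact isUnit_of_dvd_unit (Finset.dvd_prod_of_mem (fun a => ψ (y a)) (hs'f.mem_toFinset.2 ha)) hu
      have h2 : IsIntegral R (φ (y a • a)) := (hy a).map φ
      have h3 : IsIntegral ℤ_[p] (φ (y a • a)) := by
        let : Algebra R ℤ_[p] := ψ.toAlgebra
        have : IsScalarTower R ℤ_[p] F := IsScalarTower.of_algebraMap_eq fun _ => rfl
        exact h2.tower_top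
      obtain ⟨v, hv⟩ := h1.exists_left_inv
      have h4 : φ a = algebraMap ℤ_[p] F v * φ (y a • a) := by
        rw [map_smul, Algebra.smul_def]
        change _ = _ * (algebraMap ℤ_[p] F (ψ (y a)) * _)
        rw [← mul_assoc, ← map_mul, hv, map_one, one_mul]
      rw [h4]
      exact isIntegral_algebraMap.mul h3
    intro a
    have ha : a ∈ Algebra.adjoin ℤ s' := hs' ▸ trivial
    change IsIntegral ℤ_[p] (φ a)
    induction ha using Algebra.adjoin_induction with
    | mem x hx => exact hgen x hx
    | algebraMap r => 
      have : φ (algebraMap ℤ A r) = algebraMap ℤ_[p] F (r : ℤ_[p]) := by simp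
      rw [this]; exact isIntegral_algebraMap
    | add x y _ _ hx hy => rw [map_add]; exact hx.add hy
    | mul x y _ _ hx hy => rw [map_mul]; exact hx.mul hy

theorem exists_padic_model {K : Type*} [Field K] [CharZero K] (s : Finset K) :
    ∃ (p : ℕ) (_ : Fact p.Prime) (S : Type) (_ : CommRing S) (_ : IsDomain S) (_ : CharZero S)
      (_ : Algebra ℤ_[p] S) (_ : Module.Finite ℤ_[p] S)
      (θ : Algebra.adjoin ℤ (s : Set K) →+* S), Function.Injective θ ∧ ¬ IsUnit (p : S) := by
  classical
  obtain ⟨p, hp, φ, hφ, hIntegral⟩ := exists_padic_embedding s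
  let F := AlgebraicClosure ℚ_[p]
  let A := Algebra.adjoin ℤ (s : Set K)
  let s' : Set A := {a | (a : K) ∈ s}
  have hs'f : s'.Finite := s.finite_toSet.preimage Subtype.val_injective.injOn
  have hs' : Algebra.adjoin ℤ s' = ⊤ := Algebra.adjoin_adjoin_coe_preimage
  let S := Algebra.adjoin ℤ_[p] (φ '' s')
  have hfin : Module.Finite ℤ_[p] S := by
    refine Algebra.finite_adjoin_of_finite_of_isIntegral (hs'f.image _) ?_
    rintro _ ⟨a, _, rfl⟩
    exact hIntegral a
  have hmem : ∀ a, φ a ∈ S := by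
    intro a
    have ha : a ∈ Algebra.adjoin ℤ s' := hs' ▸ trivial
    induction ha using Algebra.adjoin_induction with
    | mem x hx => exact Algebra.subset_adjoin ⟨x, hx, rfl⟩
    | algebraMap r =>
      have : φ (algebraMap ℤ A r) = algebraMap ℤ_[p] F (r : ℤ_[p]) := by simp
      rw [this]; exact S.algebraMap_mem _
    | add x y _ _ hx hy => rw [map_add]; exact S.add_mem hx hy
    | mul x y _ _ hx hy => rw [map_mul]; exact S.mul_mem hx hy
  refine ⟨p, hp, S, inferInstance, inferInstance, ?_, inferInstance, hfin,
    φ.codRestrict S hmem, ?_, ?_⟩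
  · have : CharZero F := charZero_of_injective_algebraMap (algebraMap ℚ_[p] F).injective
    exact ⟨fun a b h => Nat.cast_injective (R := F) (by simpa using congrArg (Subtype.val) h)⟩
  · intro a b h
    exact hφ (congrArg Subtype.val h)
  · intro h
    have h0 : (algebraMap ℤ_[p] S) (p : ℤ_[p]) = (p : S) := by simp
    have hintS : Algebra.IsIntegral ℤ_[p] S := inferInstance
    have hinj : Function.Injective (algebraMap ℤ_[p] S) := by
      have : Function.Injective (algebraMap ℤ_[p] F) := by
        rw [IsScalarTower.algebraMap_eq ℤ_[p] ℚ_[p] F]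
        exact (algebraMap ℚ_[p] F).injective.comp (FaithfulSMul.algebraMap_injective _ _)
      intro x y hxy
      exact this (congrArg Subtype.val hxy)
    have hl : IsLocalHom (algebraMap ℤ_[p] S) := by
      have : FaithfulSMul ℤ_[p] S := (faithfulSMul_iff_algebraMap_injective _ _).2 hinj
      exact Algebra.IsIntegral.isLocalHom _ _
    rw [← h0] at h
    exact PadicInt.prime_p.not_isUnit (hl.map_nonunit _ h)

open Matrix in
theorem sml_padic (p : ℕ) [Fact p.Prime] {S : Type} [CommRing S] [IsDomain S] [CharZero S]
    [Algebra ℤ_[p] S] [Module.Finite ℤ_[p] S] (hpS : ¬ IsUnit (p : S)) {d : ℕ}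
    (M M' : Matrix (Fin d) (Fin d) S) (hM : M * M' = 1) (u v : Fin d → S) :
    ∃ N : ℕ, 0 < N ∧ ∀ r, (∀ n, u ⬝ᵥ (M ^ (r + N * n) *ᵥ v) = 0) ∨
      {n | u ⬝ᵥ (M ^ (r + N * n) *ᵥ v) = 0}.Finite := by
  classical
  have hnoeth : IsNoetherianRing S := IsNoetherianRing.of_finite ℤ_[p] S
  have hkrull : ∀ x : S, (∀ j : ℕ, (p : S) ^ j ∣ x) → x = 0 := by
    intro x hx
    have h1 := Ideal.iInf_pow_eq_bot_of_isDomain (Ideal.span {(p : S)})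
      (by rwa [Ne, Ideal.span_singleton_eq_top])
    have h2 : x ∈ ⨅ i : ℕ, Ideal.span {(p : S)} ^ i := by
      rw [Ideal.mem_iInf]
      intro i
      rw [Ideal.span_singleton_pow, Ideal.mem_span_singleton]
      exact hx i
    rwa [h1] at h2
  -- finite quotient
  let I : Ideal S := Ideal.span {(p : S) ^ 2}
  have hfin : Finite (S ⧸ I) := by
    let J : Ideal ℤ_[p] := Ideal.span {(p : ℤ_[p]) ^ 2}
    have hJ : Finite (ℤ_[p] ⧸ J) := by
      have hk : J = RingHom.ker (PadicInt.toZModPow 2 : ℤ_[p] →+* ZMod (p ^ 2)) :=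
        (PadicInt.ker_toZModPow 2).symm
      rw [hk]
      have : NeZero (p ^ 2) := ⟨pow_ne_zero _ (Fact.out : p.Prime).ne_zero⟩
      exact Finite.of_injective _ (RingHom.kerLift_injective (PadicInt.toZModPow 2))
    have hI : I = J.map (algebraMap ℤ_[p] S) := by
      rw [Ideal.map_span]; simp [I]
    rw [hI]
    have : Module.Finite (ℤ_[p] ⧸ J) (S ⧸ J.map (algebraMap ℤ_[p] S)) :=
      Module.Finite.of_restrictScalars_finite ℤ_[p] _ _
    exact Module.finite_of_finite (ℤ_[p] ⧸ J)
  let π : S →+* S ⧸ I := Ideal.Quotient.mk I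
  have hMM' : π.mapMatrix M * π.mapMatrix M' = 1 := by rw [← map_mul, hM, map_one]
  let U : (Matrix (Fin d) (Fin d) (S ⧸ I))ˣ :=
    ⟨π.mapMatrix M, π.mapMatrix M', hMM', mul_eq_one_comm.1 hMM'⟩
  obtain ⟨N, hN, hU⟩ : ∃ N : ℕ, 0 < N ∧ U ^ N = 1 := by
    have := isOfFinOrder_of_finite U
    exact isOfFinOrder_iff_pow_eq_one.1 this
  have hMN : π.mapMatrix (M ^ N) = 1 := by
    rw [map_pow]
    exact congrArg Units.val hU
  have hE : ∀ i j, ∃ e, (M ^ N - 1) i j = (p : S) ^ 2 * e := by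
    intro i j
    have h1 : π.mapMatrix (M ^ N - 1) = 0 := by rw [map_sub, hMN, map_one, sub_self]
    have h2 : π ((M ^ N - 1) i j) = 0 := congrFun (congrFun h1 i) j
    rw [Ideal.Quotient.eq_zero_iff_mem, Ideal.mem_span_singleton] at h2
    exact h2
  choose E0 hE0 using hE
  let E : Matrix (Fin d) (Fin d) S := Matrix.of E0
  have hME : M ^ N = (p : S) ^ 2 • E + 1 := by
    rw [← sub_eq_iff_eq_add]
    ext i j
    simp [E, hE0]
  refine ⟨N, hN, fun r => ?_⟩
  by_cases hinf : {n | u ⬝ᵥ (M ^ (r + N * n) *ᵥ v) = 0}.Finite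
  · exact Or.inr hinf
  left
  have hfac : ∀ k : ℕ, ∃ h : S, (p : S) ^ k = (k.factorial : S) * h := by
    intro k
    obtain ⟨h, hh⟩ := factorial_dvd_padic p k
    refine ⟨algebraMap _ _ h, ?_⟩
    have := congrArg (algebraMap ℤ_[p] S) hh
    simpa using this
  choose h hh using hfac
  let w : ℕ → S := fun k => h k * (u ⬝ᵥ ((M ^ r * E ^ k) *ᵥ v))
  refine newton_zero (p : S) hkrull w (fun n => u ⬝ᵥ (M ^ (r + N * n) *ᵥ v)) ?_ hinf
  intro n m hnm
  have hpow : M ^ (r + N * n) = ∑ k ∈ Finset.range (m + 1),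
      ((n.choose k : S) * (p : S) ^ (2 * k)) • (M ^ r * E ^ k) := by
    rw [pow_add, pow_mul, hME, (Commute.one_right _).add_pow, Finset.mul_sum]
    have hsub : Finset.range (n + 1) ⊆ Finset.range (m + 1) := by
      intro x; simp only [Finset.mem_range]; omega
    rw [← Finset.sum_subset hsub]
    · refine Finset.sum_congr rfl fun k _ => ?_
      rw [one_pow, mul_one, smul_pow, ← pow_mul, ← Nat.cast_comm, ← nsmul_eq_mul,
        mul_smul, mul_smul_comm, mul_smul_comm, Nat.cast_smul_eq_nsmul]
    · intro k _ hk
      rw [Nat.choose_eq_zero_of_lt (by simpa using hk)]; simp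
  simp only [hpow]
  rw [Matrix.sum_mulVec, dotProduct_sum]
  refine Finset.sum_congr rfl fun k _ => ?_
  rw [smul_mulVec, dotProduct_smul, smul_eq_mul, Nat.descFactorial_eq_factorial_mul_choose]
  simp only [w]
  rw [two_mul, pow_add]
  nth_rewrite 1 [hh k]
  push_cast
  ring

open Matrix in
theorem sml_matrix {K : Type*} [Field K] [CharZero K] {d : ℕ}
    (M M' : Matrix (Fin d) (Fin d) K) (hM : M * M' = 1) (u v : Fin d → K) :
    IsSML {n | u ⬝ᵥ (M ^ n *ᵥ v) = 0} := by
  classical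
  let s : Finset K := (Finset.univ.image fun ij : Fin d × Fin d => M ij.1 ij.2) ∪
    (Finset.univ.image fun ij : Fin d × Fin d => M' ij.1 ij.2) ∪
    Finset.univ.image u ∪ Finset.univ.image v
  obtain ⟨p, hp, S, _, _, _, _, _, θ, hθ, hpS⟩ := exists_padic_model s
  let A := Algebra.adjoin ℤ (s : Set K)
  have hsub : ∀ x ∈ s, x ∈ A := fun x hx => Algebra.subset_adjoin hx
  let MA : Matrix (Fin d) (Fin d) A := Matrix.of fun i j => ⟨M i j, hsub _ (by simp only [s, Finset.mem_union, Finset.mem_image]; exact Or.inl (Or.inl (Or.inl ⟨(i, j), Finset.mem_univ _, rfl⟩)))⟩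
  let MA' : Matrix (Fin d) (Fin d) A := Matrix.of fun i j => ⟨M' i j, hsub _ (by simp only [s, Finset.mem_union, Finset.mem_image]; exact Or.inl (Or.inl (Or.inr ⟨(i, j), Finset.mem_univ _, rfl⟩)))⟩
  let uA : Fin d → A := fun i => ⟨u i, hsub _ (by simp [s])⟩
  let vA : Fin d → A := fun i => ⟨v i, hsub _ (by simp [s])⟩
  let ι : A →+* K := A.val.toRingHom
  have hι : Function.Injective ι := Subtype.val_injective
  have e1 : ι.mapMatrix MA = M := rfl
  have e2 : ι.mapMatrix MA' = M' := rfl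
  have hMA : MA * MA' = 1 := by
    have hinj : Function.Injective (ι.mapMatrix : Matrix (Fin d) (Fin d) A →+* _) :=
      Matrix.map_injective hι
    apply hinj
    rw [map_mul, e1, e2, hM, map_one]
  have hev : ∀ {B : Type _} [CommRing B] (f : A →+* B) (n : ℕ),
      f (uA ⬝ᵥ (MA ^ n *ᵥ vA)) = (f ∘ uA) ⬝ᵥ ((f.mapMatrix MA) ^ n *ᵥ (f ∘ vA)) := by
    intro B _ f n
    rw [RingHom.map_dotProduct, ← map_pow f.mapMatrix]
    congr 1
    ext i
    exact RingHom.map_mulVec f _ _ i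
  have hK : ∀ n, u ⬝ᵥ (M ^ n *ᵥ v) = ι (uA ⬝ᵥ (MA ^ n *ᵥ vA)) := by
    intro n
    rw [RingHom.map_dotProduct]
    rw [show ι ∘ (MA ^ n *ᵥ vA) = (ι.mapMatrix (MA ^ n)) *ᵥ (ι ∘ vA) from
      funext fun i => RingHom.map_mulVec ι _ _ i, map_pow, e1]
    rfl
  have hiff : ∀ n, u ⬝ᵥ (M ^ n *ᵥ v) = 0 ↔
      (θ ∘ uA) ⬝ᵥ ((θ.mapMatrix MA) ^ n *ᵥ (θ ∘ vA)) = 0 := by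
    intro n
    rw [hK, map_eq_zero_iff ι hι, ← map_eq_zero_iff θ hθ, hev θ]
  obtain ⟨N, hN, h⟩ := sml_padic p hpS (θ.mapMatrix MA) (θ.mapMatrix MA')
    (by rw [← map_mul, hMA, map_one]) (θ ∘ uA) (θ ∘ vA)
  refine isSML_of_residues _ N hN fun r _ => ?_
  simp only [Set.mem_ofPred_eq, hiff]
  exact h r

theorem orbit_in_hyperplane_is_SML {K V : Type*} [Field K] [CharZero K]
    [AddCommGroup V] [Module K V] [FiniteDimensional K V]
    (σ : V ≃ₗ[K] V) (L R : Submodule K V)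
    (hL : Module.finrank K L = 1)
    (hR : Module.finrank K R + 1 = Module.finrank K V) :
    IsSML {n : ℕ |
      L.map ((σ ^ n : V ≃ₗ[K] V) : V →ₗ[K] V) ≤ R} := by
  classical
  obtain ⟨v, hLv⟩ : ∃ v : V, L = Submodule.span K {v} := by
    obtain ⟨v, -, hv⟩ := finrank_eq_one_iff'.1 hL
    refine ⟨v, ?_⟩
    apply le_antisymm
    · intro x hx
      obtain ⟨c, hc⟩ := hv ⟨x, hx⟩
      rw [Submodule.mem_span_singleton]
      exact ⟨c, congrArg Subtype.val hc⟩
    · rw [Submodule.span_singleton_le_iff_mem]; exact v.2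
  have hq : Module.finrank K (V ⧸ R) = 1 := by
    have := R.finrank_quotient_add_finrank
    omega
  let e : (V ⧸ R) ≃ₗ[K] K := LinearEquiv.ofFinrankEq _ _ (by simp [hq])
  let u : V →ₗ[K] K := e.toLinearMap ∘ₗ R.mkQ
  have hu : ∀ x, x ∈ R ↔ u x = 0 := by
    intro x
    simp [u]
  let b := Module.finBasis K V
  let M := LinearMap.toMatrix b b (σ : V →ₗ[K] V)
  let M' := LinearMap.toMatrix b b (σ.symm : V →ₗ[K] V)
  have hM : M * M' = 1 := by
    rw [← LinearMap.toMatrix_comp]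
    simp
  have hpow : ∀ n : ℕ, ((σ ^ n : V ≃ₗ[K] V) : V →ₗ[K] V) = (σ : V →ₗ[K] V) ^ n := by
    intro n
    induction n with
    | zero => rfl
    | succ n ih => rw [pow_succ, pow_succ, ← ih]; rfl
  have key := sml_matrix M M' hM (fun i => u (b i)) (b.repr (v : V))
  refine Eq.mpr (congrArg IsSML (Set.ext fun n => ?_)) key
  rw [Set.mem_ofPred_eq, Set.mem_ofPred_eq]
  rw [hLv, Submodule.map_span, Set.image_singleton, Submodule.span_singleton_le_iff_mem, hu, hpow]
  have h1 : M ^ n = LinearMap.toMatrix b b ((σ : V →ₗ[K] V) ^ n) :=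
    LinearMap.toMatrix_pow b _ n
  rw [h1, LinearMap.toMatrix_mulVec_repr]
  conv_lhs => rw [← b.sum_repr (((σ : V →ₗ[K] V) ^ n) v), map_sum]
  simp only [map_smul, smul_eq_mul, dotProduct, mul_comm]
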